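/- There exists a nonconstant periodic function φ ∈ C⁴(ℝ) that solves, on all of ℝ, the fourth-order equation φ⁗(s) + 18 φ‴(s) + 119 φ″(s) + 342 φ′(s) + 360 φ(s) = −sign(φ(s))·|φ(s)|^{1/3}, whose linear part factorizes as (D+3)(D+4)(D+5)(D+6) with D = d/ds. In particular, the oscillatory component governing the behaviour of compacton profiles of the cubic fifth-order NDE near their interfaces changes sign infinitely often. -/

import Mathlib

/-!
We look for `φ` antiperiodic and positive on one half-period `(0, T)`. In the variable `y = exp s`
the function `F(y) = y ^ 6 φ(log y)` satisfies `F⁗ = -F ^ (1 / 3)` on `(1, q)`, `q = exp T`, and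
antiperiodicity of `φ` becomes `F⁽ʲ⁾(q) = -q ^ (6 - j) F⁽ʲ⁾(1)` for `j < 4`, with `F` vanishing at
both ends. The conditions with `j ≤ 2` define, for `q` large enough, a positive Green kernel `K`,
and writing `F = g ^ 3` (up to scaling) turns the problem into `g ^ 3 = ∫ K · s * g s`, whose
solution is the fixed point of a contraction in logarithmic coordinates and depends continuously on
`q`. The remaining condition `j = 3` is met by shooting in `q`: its defect is negative where the
normalized kernel loses the Dirac mass, and positive at `q = 3` because `g t / t` is nonincreasing.
-/

open Set Filter

open MeasureTheory BoundedContinuousFunction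
open scoped NNReal

lemma contractingWith_of_monotone_of_map_add_const_le {X : Type*} [TopologicalSpace X] {θ : ℝ≥0}
    (hθ : θ < 1) {Λ : (X →ᵇ ℝ) → X →ᵇ ℝ} (hmono : Monotone Λ)
    (hconst : ∀ (v : X →ᵇ ℝ) (c : ℝ≥0), Λ (v + const X (c : ℝ)) ≤ Λ v + const X (θ * c : ℝ)) :
    ContractingWith θ Λ := by
  have one_sided (v w : X →ᵇ ℝ) (x : X) : Λ v x ≤ Λ w x + θ * dist v w := by
    have hle : v ≤ w + const X (nndist v w : ℝ) := fun y => by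
      change v y ≤ w y + dist v w
      have := (le_abs_self (v y - w y)).trans
        ((Real.dist_eq _ _).symm.trans_le (dist_coe_le_dist y))
      linarith
    simpa using (hmono hle).trans (hconst w (nndist v w)) x
  refine ⟨hθ, LipschitzWith.of_dist_le_mul fun v w => ?_⟩
  refine (dist_le (by positivity)).2 fun x => ?_
  rw [Real.dist_eq, abs_sub_le_iff]
  have h₁ := one_sided v w x
  have h₂ := one_sided w v x
  rw [dist_comm w v] at h₂
  constructor <;> linarith

lemma continuous_integral_of_norm_le {P S : Type*} [TopologicalSpace P] [FirstCountableTopology P]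
    [TopologicalSpace S] [MeasurableSpace S] [OpensMeasurableSpace S] {μ : Measure S}
    [IsFiniteMeasure μ] {F : P → S → ℝ} (hF₁ : ∀ s, Continuous (F · s))
    (hF₂ : ∀ p, Continuous (F p)) {C : ℝ} (hC : ∀ p s, ‖F p s‖ ≤ C) :
    Continuous fun p => ∫ s, F p s ∂μ :=
  continuous_of_dominated (fun p => (hF₂ p).aestronglyMeasurable)
    (fun p => .of_forall (hC p)) (integrable_const C) (.of_forall hF₁)

section PowerNonlinearity

variable {Q S : Type*} [TopologicalSpace Q] [TopologicalSpace S] {k : Q × S → S → ℝ} {C ε : ℝ}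

lemma norm_mul_exp_le (hk₀ : ∀ p s, 0 ≤ k p s) (hkC : ∀ p s, k p s ≤ C) (θ : ℝ≥0)
    (v : Q × S →ᵇ ℝ) (p : Q × S) (s : S) :
    ‖k p s * Real.exp (θ * v (p.1, s))‖ ≤ C * Real.exp (θ * ‖v‖) := by
  rw [Real.norm_of_nonneg (mul_nonneg (hk₀ p s) (Real.exp_pos _).le)]
  have := (le_abs_self _).trans (v.norm_coe_le_norm (p.1, s))
  have := (hk₀ p s).trans (hkC p s)
  gcongr
  exact hkC p s

variable [MeasurableSpace S] [OpensMeasurableSpace S] {μ : Measure S} [IsFiniteMeasure μ]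

lemma integrable_mul_exp (hk₂ : ∀ p, Continuous (k p)) (hk₀ : ∀ p s, 0 ≤ k p s)
    (hkC : ∀ p s, k p s ≤ C) (θ : ℝ≥0) (v : Q × S →ᵇ ℝ) (p : Q × S) :
    Integrable (fun s => k p s * Real.exp (θ * v (p.1, s))) μ := by
  have := hk₂ p
  exact .of_bound (by fun_prop : Continuous _).aestronglyMeasurable _
    (.of_forall (norm_mul_exp_le hk₀ hkC θ v p))

lemma exists_exp_eq_integral_mul_exp [FirstCountableTopology Q] [FirstCountableTopology S]
    (hk₁ : ∀ s, Continuous (k · s)) (hk₂ : ∀ p, Continuous (k p)) (hk₀ : ∀ p s, 0 ≤ k p s)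
    (hkC : ∀ p s, k p s ≤ C) (hε : 0 < ε) (hkε : ∀ p, ε ≤ ∫ s, k p s ∂μ) (θ : ℝ≥0)
    (v : Q × S →ᵇ ℝ) :
    ∃ w : Q × S →ᵇ ℝ, ∀ p, Real.exp (w p) = ∫ s, k p s * Real.exp (θ * v (p.1, s)) ∂μ := by
  let N (p : Q × S) : ℝ := ∫ s, k p s * Real.exp (θ * v (p.1, s)) ∂μ
  have hN_lower (p) : ε * Real.exp (-(θ * ‖v‖)) ≤ N p := by
    calc ε * Real.exp (-(θ * ‖v‖)) ≤ (∫ s, k p s ∂μ) * Real.exp (-(θ * ‖v‖)) := by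
          gcongr; exact hkε p
      _ = ∫ s, k p s * Real.exp (-(θ * ‖v‖)) ∂μ := (integral_mul_const _ _).symm
      _ ≤ N p := by
          refine integral_mono ?_ (integrable_mul_exp hk₂ hk₀ hkC θ v p) fun s => ?_
          · exact .mul_const (by simpa using integrable_mul_exp hk₂ hk₀ hkC θ 0 p) _
          · have := neg_le_of_abs_le (v.norm_coe_le_norm (p.1, s))
            have := hk₀ p s
            rw [← mul_neg]
            dsimp only
            gcongr
  have hN_upper (p) : N p ≤ C * Real.exp (θ * ‖v‖) * μ.real univ :=
    (le_abs_self _).trans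
      (norm_integral_le_of_norm_le_const (.of_forall (norm_mul_exp_le hk₀ hkC θ v p)))
  have hN_pos (p) : 0 < N p := lt_of_lt_of_le (by positivity) (hN_lower p)
  have hN_cont : Continuous N :=
    continuous_integral_of_norm_le (fun s => by have := hk₁ s; fun_prop)
      (fun p => by have := hk₂ p; fun_prop) (norm_mul_exp_le hk₀ hkC θ v)
  refine ⟨ofNormedAddCommGroup (fun p => Real.log (N p))
    (hN_cont.log fun p => (hN_pos p).ne') _ fun p => abs_le_max_abs_abs
      (Real.log_le_log (by positivity) (hN_lower p)) (Real.log_le_log (hN_pos p) (hN_upper p)),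
    fun p => Real.exp_log (hN_pos p)⟩

-- In logarithmic coordinates `u = exp v` a positive operator composed with `u ↦ u ^ θ` is monotone
-- and turns addition of `c` into addition of `θ c`, hence is a `θ`-contraction of the sup norm.
theorem exists_exp_eq_integral_mul_exp_self [FirstCountableTopology Q] [FirstCountableTopology S]
    (hk₁ : ∀ s, Continuous (k · s)) (hk₂ : ∀ p, Continuous (k p)) (hk₀ : ∀ p s, 0 ≤ k p s)
    (hkC : ∀ p s, k p s ≤ C) (hε : 0 < ε) (hkε : ∀ p, ε ≤ ∫ s, k p s ∂μ) {θ : ℝ≥0} (hθ : θ < 1) :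
    ∃ v : Q × S →ᵇ ℝ, ∀ p, Real.exp (v p) = ∫ s, k p s * Real.exp (θ * v (p.1, s)) ∂μ := by
  choose Λ hΛ using exists_exp_eq_integral_mul_exp hk₁ hk₂ hk₀ hkC hε hkε θ
  have hmono : Monotone Λ := fun v w hvw p => by
    change Λ v p ≤ Λ w p
    rw [← Real.exp_le_exp, hΛ, hΛ]
    refine integral_mono (integrable_mul_exp hk₂ hk₀ hkC θ v p)
      (integrable_mul_exp hk₂ hk₀ hkC θ w p) fun s => ?_
    have := hk₀ p s
    dsimp only
    gcongr
    exact hvw _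
  have hconst (v : Q × S →ᵇ ℝ) (c : ℝ≥0) : Λ (v + const _ (c : ℝ)) ≤ Λ v + const _ (θ * c : ℝ) :=
    fun p => by
      change Λ (v + const _ (c : ℝ)) p ≤ Λ v p + θ * c
      rw [← Real.exp_le_exp, hΛ, Real.exp_add, hΛ, ← integral_mul_const]
      refine le_of_eq (integral_congr_ae (.of_forall fun s => ?_))
      simp only [coe_add, Pi.add_apply, const_apply, mul_add, Real.exp_add, mul_assoc]
  have hΛ_contr := contractingWith_of_monotone_of_map_add_const_le hθ hmono hconst
  refine ⟨hΛ_contr.fixedPoint, fun p => ?_⟩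
  rw [← hΛ, hΛ_contr.fixedPoint_isFixedPt]

end PowerNonlinearity

section IntegralEquation

/-- Lebesgue measure on the open interval `Ioo a b`, as a measure on the subtype. -/
noncomputable def volumeIoo (a b : ℝ) : Measure (Ioo a b) := Measure.comap Subtype.val volume

instance (a b : ℝ) : IsFiniteMeasure (volumeIoo a b) := by
  refine ⟨?_⟩
  rw [volumeIoo, comap_subtype_coe_apply measurableSet_Ioo, image_univ, Subtype.range_coe]
  exact measure_Ioo_lt_top

lemma integral_volumeIoo {a b : ℝ} (hab : a ≤ b) (f : ℝ → ℝ) :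
    ∫ s : Ioo a b, f s ∂volumeIoo a b = ∫ s in a..b, f s := by
  rw [volumeIoo, integral_subtype_comap measurableSet_Ioo, intervalIntegral.integral_of_le hab,
    integral_Ioc_eq_integral_Ioo]

/-- The weight `t * (1 - t)` with which positive solutions vanish at the ends of `[0, 1]`. -/
def endWeight (t : ℝ) : ℝ := t * (1 - t)

@[fun_prop]
lemma continuous_endWeight : Continuous endWeight := by unfold endWeight; fun_prop

variable {t : ℝ} {n : ℕ}

lemma endWeight_pos (ht : t ∈ Ioo (0 : ℝ) 1) : 0 < endWeight t := mul_pos ht.1 (sub_pos.2 ht.2)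

lemma endWeight_mem_Icc (ht : t ∈ Icc (0 : ℝ) 1) : endWeight t ∈ Icc (0 : ℝ) 1 := by
  unfold endWeight
  constructor <;> nlinarith [ht.1, ht.2]

lemma endWeight_rpow_inv_mem_Icc (n : ℕ) (ht : t ∈ Icc (0 : ℝ) 1) :
    endWeight t ^ (n⁻¹ : ℝ) ∈ Icc (0 : ℝ) 1 :=
  have ⟨h₀, h₁⟩ := endWeight_mem_Icc ht
  ⟨by positivity, Real.rpow_le_one h₀ h₁ (by positivity)⟩

@[fun_prop]
lemma continuous_endWeight_rpow_inv (n : ℕ) : Continuous fun t => endWeight t ^ (n⁻¹ : ℝ) :=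
  continuous_endWeight.rpow_const fun _ => .inr (by positivity)

/-- A continuous family of kernels on `[0, 1]` that, as functions of the first variable, lie between
multiples of `endWeight`. This is the form of positivity under which the integral equation
`g ^ n = ∫ K · s * g s` contracts. -/
structure IsEndWeightKernel {Q : Type*} [TopologicalSpace Q] (ε C : ℝ) (K : Q → ℝ → ℝ → ℝ) :
    Prop where
  continuous_left : ∀ s, Continuous fun p : Q × ℝ => K p.1 p.2 s
  continuous_right : ∀ q t, Continuous (K q t)
  pos : 0 < ε
  lower : ∀ q, ∀ t ∈ Icc (0 : ℝ) 1, ∀ s ∈ Icc (0 : ℝ) 1, ε * endWeight s * endWeight t ≤ K q t s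
  upper : ∀ q, ∀ t ∈ Icc (0 : ℝ) 1, ∀ s ∈ Icc (0 : ℝ) 1, K q t s ≤ C * endWeight t

namespace IsEndWeightKernel

variable {Q : Type*} [TopologicalSpace Q] {K : Q → ℝ → ℝ → ℝ} {ε C : ℝ}

lemma nonneg (hK : IsEndWeightKernel ε C K) (q : Q) {t s : ℝ} (ht : t ∈ Icc (0 : ℝ) 1)
    (hs : s ∈ Icc (0 : ℝ) 1) : 0 ≤ K q t s :=
  (mul_nonneg (mul_nonneg hK.pos.le (endWeight_mem_Icc hs).1) (endWeight_mem_Icc ht).1).trans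
    (hK.lower q t ht s hs)

lemma div_endWeight_mem_Icc (hK : IsEndWeightKernel ε C K) (q : Q) {t s : ℝ}
    (ht : t ∈ Ioo (0 : ℝ) 1) (hs : s ∈ Icc (0 : ℝ) 1) :
    K q t s / endWeight t ∈ Icc (ε * endWeight s) C := by
  have ht' := Ioo_subset_Icc_self ht
  exact ⟨(le_div_iff₀ (endWeight_pos ht)).2 (hK.lower q t ht' s hs),
    (div_le_iff₀ (endWeight_pos ht)).2 (hK.upper q t ht' s hs)⟩

variable [FirstCountableTopology Q]

lemma continuous_integral_mul (hK : IsEndWeightKernel ε C K)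
    {c : Q → Ioo (0 : ℝ) 1 → ℝ} {M : ℝ} (hc₁ : ∀ s, Continuous (c · s))
    (hc₂ : ∀ q, Continuous (c q)) (hM : ∀ q s, ‖c q s‖ ≤ M) :
    Continuous fun p : Q × Icc (0 : ℝ) 1 => ∫ s, K p.1 p.2 s * c p.1 s ∂volumeIoo 0 1 := by
  refine continuous_integral_of_norm_le (C := |C| * M) (fun s => ?_) (fun p => ?_) fun p s => ?_
  · have := (hK.continuous_left s).comp
      (by fun_prop : Continuous fun p : Q × Icc (0 : ℝ) 1 => (p.1, (p.2 : ℝ)))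
    exact this.mul ((hc₁ s).comp continuous_fst)
  · exact ((hK.continuous_right p.1 p.2).comp continuous_subtype_val).mul (hc₂ p.1)
  · have hs := Ioo_subset_Icc_self s.2
    have hK_norm : ‖K p.1 p.2 s‖ ≤ |C| := by
      rw [Real.norm_of_nonneg (hK.nonneg p.1 p.2.2 hs)]
      have ⟨h₀, h₁⟩ := endWeight_mem_Icc p.2.2
      exact (hK.upper p.1 p.2 p.2.2 s hs).trans
        ((mul_le_mul_of_nonneg_right (le_abs_self C) h₀).trans
          (mul_le_of_le_one_right (abs_nonneg C) h₁))
    rw [norm_mul]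
    exact mul_le_mul hK_norm (hM p.1 s) (norm_nonneg _) (abs_nonneg C)

lemma exists_endWeight_mul_exp_eq_integral (hK : IsEndWeightKernel ε C K) (hn : 1 < n) :
    ∃ v : Q × Ioo (0 : ℝ) 1 →ᵇ ℝ, ∀ q (t : Ioo (0 : ℝ) 1),
      endWeight t * Real.exp (v (q, t)) =
        ∫ s : Ioo (0 : ℝ) 1, K q t s * (endWeight s ^ (n⁻¹ : ℝ) * Real.exp ((n⁻¹ : ℝ) * v (q, s)))
          ∂volumeIoo 0 1 := by
  let c (s : ℝ) : ℝ := endWeight s ^ (n⁻¹ : ℝ)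
  let k (p : Q × Ioo (0 : ℝ) 1) (s : Ioo (0 : ℝ) 1) : ℝ := K p.1 p.2 s / endWeight p.2 * c s
  have hc (s : Ioo (0 : ℝ) 1) : c s ∈ Icc 0 1 :=
    endWeight_rpow_inv_mem_Icc n (Ioo_subset_Icc_self s.2)
  have hw (t : Ioo (0 : ℝ) 1) : 0 < endWeight t := endWeight_pos t.2
  have hquot (p : Q × Ioo (0 : ℝ) 1) (s : Ioo (0 : ℝ) 1) :
      K p.1 p.2 s / endWeight p.2 ∈ Icc (ε * endWeight s) C :=
    hK.div_endWeight_mem_Icc p.1 p.2.2 (Ioo_subset_Icc_self s.2)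
  have hmin (s : Ioo (0 : ℝ) 1) : 0 ≤ ε * endWeight s := (mul_pos hK.pos (hw s)).le
  have hk_nonneg (p s) : 0 ≤ k p s := mul_nonneg ((hmin s).trans (hquot p s).1) (hc s).1
  have hk_upper (p s) : k p s ≤ C :=
    (mul_le_of_le_one_right ((hmin s).trans (hquot p s).1) (hc s).2).trans (hquot p s).2
  have hk₁ (s) : Continuous (k · s) := by
    have := (hK.continuous_left s).comp
      (by fun_prop : Continuous fun p : Q × Ioo (0 : ℝ) 1 => (p.1, (p.2 : ℝ)))
    exact (this.div (by fun_prop) fun p => (hw p.2).ne').mul_const _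
  have hk₂ (p) : Continuous (k p) := by
    have := hK.continuous_right p.1 p.2
    fun_prop
  have hmass (p) : ∫ s in (0 : ℝ)..1, ε * endWeight s * c s ≤ ∫ s, k p s ∂volumeIoo 0 1 := by
    rw [← integral_volumeIoo zero_le_one]
    exact integral_mono_of_nonneg (.of_forall fun s => mul_nonneg (hmin s) (hc s).1)
      (.of_bound (hk₂ p).aestronglyMeasurable C
        (.of_forall fun s => (Real.norm_of_nonneg (hk_nonneg p s)).trans_le (hk_upper p s)))
      (.of_forall fun s => mul_le_mul_of_nonneg_right (hquot p s).1 (hc s).1)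
  have hmass_pos : 0 < ∫ s in (0 : ℝ)..1, ε * endWeight s * c s :=
    intervalIntegral.intervalIntegral_pos_of_pos_on
      (Continuous.intervalIntegrable (by fun_prop) _ _)
      (fun s hs => by have := hK.pos; have := endWeight_pos hs; positivity) one_pos
  obtain ⟨v, hv⟩ := exists_exp_eq_integral_mul_exp_self hk₁ hk₂ hk_nonneg hk_upper hmass_pos hmass
    (θ := (n : ℝ≥0)⁻¹) (inv_lt_one_of_one_lt₀ (by exact_mod_cast hn))
  refine ⟨v, fun q t => ?_⟩
  rw [hv, ← integral_const_mul]
  congr 1 with s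
  simp only [k, NNReal.coe_inv, NNReal.coe_natCast]
  rw [← mul_assoc, ← mul_assoc, mul_div_cancel₀ _ (hw t).ne', mul_assoc]

theorem exists_pow_eq_integral_mul (hK : IsEndWeightKernel ε C K) (hn : 1 < n) :
    ∃ g : Q → ℝ → ℝ, Continuous (fun p : Q × ℝ => g p.1 p.2) ∧
      (∀ q, ∀ t ∈ Ioo (0 : ℝ) 1, 0 < g q t) ∧
      ∀ q, ∀ t ∈ Icc (0 : ℝ) 1, g q t ^ n = ∫ s in (0 : ℝ)..1, K q t s * g q s := by
  obtain ⟨v, hv⟩ := hK.exists_endWeight_mul_exp_eq_integral hn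
  let c (q : Q) (s : Ioo (0 : ℝ) 1) : ℝ := endWeight s ^ (n⁻¹ : ℝ) * Real.exp ((n⁻¹ : ℝ) * v (q, s))
  let U (p : Q × Icc (0 : ℝ) 1) : ℝ := ∫ s : Ioo (0 : ℝ) 1, K p.1 p.2 s * c p.1 s ∂volumeIoo 0 1
  let g (q : Q) (t : ℝ) : ℝ := U (q, projIcc 0 1 zero_le_one t) ^ (n⁻¹ : ℝ)
  have hc_bound (q s) : ‖c q s‖ ≤ Real.exp ((n⁻¹ : ℝ) * ‖v‖) := by
    have ⟨h₀, h₁⟩ := endWeight_rpow_inv_mem_Icc n (Ioo_subset_Icc_self s.2)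
    rw [Real.norm_of_nonneg (mul_nonneg h₀ (Real.exp_pos _).le)]
    refine (mul_le_of_le_one_left (Real.exp_pos _).le h₁).trans ?_
    have := (le_abs_self _).trans (v.norm_coe_le_norm (q, s))
    gcongr
  have hU_cont : Continuous U :=
    hK.continuous_integral_mul (fun s => by dsimp only [c]; fun_prop)
      (fun q => ((continuous_endWeight_rpow_inv n).comp continuous_subtype_val).mul (by fun_prop))
      hc_bound
  have hU_nonneg (q) {t} (ht : t ∈ Icc (0 : ℝ) 1) : 0 ≤ U (q, ⟨t, ht⟩) :=
    integral_nonneg fun s =>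
      mul_nonneg (hK.nonneg q ht (Ioo_subset_Icc_self s.2))
        (mul_nonneg (endWeight_rpow_inv_mem_Icc n (Ioo_subset_Icc_self s.2)).1 (Real.exp_pos _).le)
  have hg_val (q) (s : Ioo (0 : ℝ) 1) : g q s = c q s := by
    have hs := Ioo_subset_Icc_self s.2
    have : U (q, ⟨s, hs⟩) = endWeight s * Real.exp (v (q, s)) := (hv q s).symm
    simp only [g, projIcc_of_mem _ hs, this, c]
    rw [Real.mul_rpow (endWeight_pos s.2).le (Real.exp_pos _).le, ← Real.exp_mul, mul_comm (v _)]
  refine ⟨g, ?_, fun q t ht => ?_, fun q t ht => ?_⟩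
  · exact (hU_cont.comp (continuous_fst.prodMk (continuous_projIcc.comp continuous_snd))).rpow_const
      fun _ => .inr (by positivity)
  · have := endWeight_pos ht
    rw [hg_val q ⟨t, ht⟩]
    positivity
  · rw [← integral_volumeIoo zero_le_one]
    simp only [hg_val, g, projIcc_of_mem _ ht]
    exact Real.rpow_inv_natCast_pow (hU_nonneg q ht) (by lia)

end IsEndWeightKernel

end IntegralEquation

section GreenKernel

/-- The weight `1 / (1 + q ^ n)` through which a boundary condition `f 1 = -q ^ n * f 0` enters the
Green kernel. -/
noncomputable def jumpWeight (n : ℕ) (q : ℝ) : ℝ := 1 / (1 + q ^ n)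

/-- The normalization of the Green kernel: `∂ₜ⁴ (green q · s)` is `-greenDet q` times the Dirac mass
at `s`, which keeps `green` polynomial in the jump weights. -/
noncomputable def greenDet (q : ℝ) : ℝ :=
  (1 / 2 - jumpWeight 4 q) * (1 / 2 - jumpWeight 5 q) - 1 / 12

/-- The first `t`-derivative at `t = 0` of `green q t s`. -/
noncomputable def greenSlope (q s : ℝ) : ℝ :=
  jumpWeight 5 q / 12 * endWeight s * ((1 - s) * (1 - jumpWeight 4 q) + jumpWeight 4 q * s)

/-- The second `t`-derivative at `t = 0` of `green q t s`. -/
noncomputable def greenCurv (q s : ℝ) : ℝ :=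
  jumpWeight 4 q * endWeight s * ((2 - s) / 6 - jumpWeight 5 q / 2)

/-- The third `t`-derivative at `t = 0` of `green q t s`. -/
noncomputable def greenThird (q s : ℝ) : ℝ :=
  -6 * greenSlope q s - 3 * greenCurv q s + greenDet q * (1 - s) ^ 3

/-- The Green kernel of `U⁗ = -greenDet q • g` on `[0, 1]` under the boundary conditions
`U 0 = U 1 = 0`, `U' 1 = -q ^ 5 * U' 0`, `U'' 1 = -q ^ 4 * U'' 0`. -/
noncomputable def green (q t s : ℝ) : ℝ :=
  greenSlope q s * t + greenCurv q s * t ^ 2 / 2 + greenThird q s * t ^ 3 / 6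
    - greenDet q * max (t - s) 0 ^ 3 / 6

/-- The kernel whose integral against `g` is `U''' 1 + q ^ 3 * U''' 0`, where
`U = ∫ green q · s * g s`; its vanishing is the shooting condition on `q`. -/
noncomputable def shootingWeight (q s : ℝ) : ℝ := (1 + q ^ 3) * greenThird q s - greenDet q

variable {n : ℕ} {p q s t : ℝ}

lemma jumpWeight_pos (hq : 0 ≤ q) : 0 < jumpWeight n q := by unfold jumpWeight; positivity

lemma one_add_pow_mul_jumpWeight (hq : 0 ≤ q) : (1 + q ^ n) * jumpWeight n q = 1 :=
  mul_one_div_cancel (by positivity)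

lemma jumpWeight_anti (hp : 0 ≤ p) (hpq : p ≤ q) : jumpWeight n q ≤ jumpWeight n p := by
  unfold jumpWeight
  gcongr

lemma jumpWeight_le_half (hq : 1 ≤ q) : jumpWeight n q ≤ 1 / 2 := by
  have := jumpWeight_anti (n := n) zero_le_one hq
  norm_num [jumpWeight] at this ⊢
  exact this

@[fun_prop]
lemma continuousOn_jumpWeight : ContinuousOn (jumpWeight n) (Ici 0) := by
  have (q : ℝ) (hq : q ∈ Ici (0 : ℝ)) : 1 + q ^ n ≠ 0 := by
    have : 0 ≤ q := hq
    positivity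
  unfold jumpWeight
  fun_prop (disch := assumption)

lemma continuousOn_greenDet : ContinuousOn greenDet (Ici 0) := by
  unfold greenDet
  fun_prop

lemma continuousOn_greenSlope (s : ℝ) : ContinuousOn (greenSlope · s) (Ici 0) := by
  unfold greenSlope
  fun_prop

lemma continuousOn_greenCurv (s : ℝ) : ContinuousOn (greenCurv · s) (Ici 0) := by
  unfold greenCurv
  fun_prop

lemma continuousOn_greenThird (s : ℝ) : ContinuousOn (greenThird · s) (Ici 0) := by
  have := continuousOn_greenDet
  have := continuousOn_greenSlope s
  have := continuousOn_greenCurv s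
  unfold greenThird
  fun_prop

lemma greenDet_mono (hp : 1 ≤ p) (hpq : p ≤ q) : greenDet p ≤ greenDet q := by
  have h₄ := jumpWeight_anti (n := 4) (by linarith) hpq
  have h₅ := jumpWeight_anti (n := 5) (by linarith) hpq
  have := jumpWeight_le_half (n := 4) hp
  have := jumpWeight_le_half (n := 5) hp
  unfold greenDet
  gcongr
  linarith

lemma greenDet_le_one (hq : 1 ≤ q) : greenDet q ≤ 1 := by
  have h₄ := jumpWeight_pos (n := 4) (zero_le_one.trans hq)
  have h₅ := jumpWeight_pos (n := 5) (zero_le_one.trans hq)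
  have := jumpWeight_le_half (n := 4) hq
  unfold greenDet
  nlinarith

lemma jumpWeight_five_le_third (hq : 1 ≤ q) (hδ : 0 ≤ greenDet q) : jumpWeight 5 q ≤ 1 / 3 := by
  have := jumpWeight_pos (n := 4) (zero_le_one.trans hq)
  have := jumpWeight_le_half (n := 5) hq
  unfold greenDet at hδ
  nlinarith

lemma exists_greenDet_eq_zero : ∃ q ∈ Icc (1 : ℝ) 3, greenDet q = 0 := by
  refine intermediate_value_Icc (by norm_num)
    (continuousOn_greenDet.mono fun q hq => zero_le_one.trans hq.1) ?_
  constructor <;> norm_num [greenDet, jumpWeight]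

lemma greenSlope_bracket_mem (hq : 1 ≤ q) (hs : s ∈ Icc (0 : ℝ) 1) :
    (1 - s) * (1 - jumpWeight 4 q) + jumpWeight 4 q * s ∈ Icc (jumpWeight 4 q) 1 := by
  have := jumpWeight_pos (n := 4) (zero_le_one.trans hq)
  have := jumpWeight_le_half (n := 4) hq
  constructor <;> nlinarith [hs.1, hs.2]

lemma greenSlope_lower (hq : 1 ≤ q) (hs : s ∈ Icc (0 : ℝ) 1) :
    jumpWeight 4 q * jumpWeight 5 q / 12 * endWeight s ≤ greenSlope q s := by
  have h₅ := jumpWeight_pos (n := 5) (zero_le_one.trans hq)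
  have hw := (endWeight_mem_Icc hs).1
  calc jumpWeight 4 q * jumpWeight 5 q / 12 * endWeight s
      = jumpWeight 5 q / 12 * endWeight s * jumpWeight 4 q := by ring
    _ ≤ greenSlope q s := by unfold greenSlope; gcongr; exact (greenSlope_bracket_mem hq hs).1

lemma greenSlope_nonneg (hq : 1 ≤ q) (hs : s ∈ Icc (0 : ℝ) 1) : 0 ≤ greenSlope q s := by
  have h₄ := jumpWeight_pos (n := 4) (zero_le_one.trans hq)
  have h₅ := jumpWeight_pos (n := 5) (zero_le_one.trans hq)
  have hw := (endWeight_mem_Icc hs).1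
  exact le_trans (by positivity) (greenSlope_lower hq hs)

lemma greenSlope_le_one (hq : 1 ≤ q) (hs : s ∈ Icc (0 : ℝ) 1) : greenSlope q s ≤ 1 := by
  have h₅ := jumpWeight_pos (n := 5) (zero_le_one.trans hq)
  have := jumpWeight_le_half (n := 5) hq
  obtain ⟨hw₀, hw₁⟩ := endWeight_mem_Icc hs
  calc greenSlope q s ≤ jumpWeight 5 q / 12 * endWeight s * 1 := by
        unfold greenSlope; gcongr; exact (greenSlope_bracket_mem hq hs).2
    _ ≤ 1 := by nlinarith

lemma greenCurv_nonneg (hq : 1 ≤ q) (hδ : 0 ≤ greenDet q) (hs : s ∈ Icc (0 : ℝ) 1) :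
    0 ≤ greenCurv q s := by
  have h₄ := jumpWeight_pos (n := 4) (zero_le_one.trans hq)
  have h₅ := jumpWeight_five_le_third hq hδ
  have hw := (endWeight_mem_Icc hs).1
  have : 0 ≤ (2 - s) / 6 - jumpWeight 5 q / 2 := by linarith [hs.2]
  unfold greenCurv
  positivity

lemma greenCurv_le_one (hq : 1 ≤ q) (hδ : 0 ≤ greenDet q) (hs : s ∈ Icc (0 : ℝ) 1) :
    greenCurv q s ≤ 1 := by
  have h₄ := jumpWeight_pos (n := 4) (zero_le_one.trans hq)
  have := jumpWeight_le_half (n := 4) hq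
  have := jumpWeight_pos (n := 5) (zero_le_one.trans hq)
  have := jumpWeight_five_le_third hq hδ
  obtain ⟨hw₀, hw₁⟩ := endWeight_mem_Icc hs
  calc greenCurv q s ≤ jumpWeight 4 q * endWeight s * 1 := by
        unfold greenCurv; gcongr; linarith [hs.1]
    _ ≤ 1 := by nlinarith

lemma greenThird_eq_sub_mul : greenThird q s =
    (1 - s) * greenDet q - endWeight s * ((2 - s) / 6 - jumpWeight 5 q / 2) := by
  unfold greenThird greenSlope greenCurv greenDet endWeight
  ring

lemma greenThird_eq_cubic : greenThird q s = (1 - s) ^ 3 / 6 - jumpWeight 5 q * (1 - s) ^ 2 / 2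
    - (jumpWeight 4 q / 2 - jumpWeight 4 q * jumpWeight 5 q) * (1 - s) := by
  unfold greenThird greenSlope greenCurv greenDet endWeight
  ring

lemma greenSlope_jump (hq : 0 ≤ q) :
    greenSlope q s + greenCurv q s + greenThird q s / 2 - greenDet q * (1 - s) ^ 2 / 2
      = -q ^ 5 * greenSlope q s := by
  unfold greenThird greenSlope greenCurv greenDet endWeight
  linear_combination (s * (1 - s)) * ((1 - s) * (1 - jumpWeight 4 q) + jumpWeight 4 q * s) / 12 *
    one_add_pow_mul_jumpWeight (n := 5) hq

lemma greenCurv_jump (hq : 0 ≤ q) :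
    greenCurv q s + greenThird q s - greenDet q * (1 - s) = -q ^ 4 * greenCurv q s := by
  unfold greenThird greenSlope greenCurv greenDet endWeight
  linear_combination (s * (1 - s)) * ((2 - s) / 6 - jumpWeight 5 q / 2) *
    one_add_pow_mul_jumpWeight (n := 4) hq

lemma green_eq_mul_add : green q t s =
    endWeight t * ((1 + t) * greenSlope q s + t * greenCurv q s / 2)
      + greenDet q / 6 * ((t * (1 - s)) ^ 3 - max (t - s) 0 ^ 3) := by
  unfold green greenThird endWeight
  ring

lemma max_sub_le_mul_one_sub (ht : t ∈ Icc (0 : ℝ) 1) (hs : s ∈ Icc (0 : ℝ) 1) :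
    max (t - s) 0 ≤ t * (1 - s) :=
  max_le (by nlinarith [hs.1, ht.2]) (mul_nonneg ht.1 (by linarith [hs.2]))

lemma mul_one_sub_sub_max_le (ht : t ∈ Icc (0 : ℝ) 1) :
    t * (1 - s) - max (t - s) 0 ≤ endWeight t := by
  unfold endWeight
  rcases le_total s t with h | h
  · nlinarith [le_max_left (t - s) 0, ht.2]
  · nlinarith [le_max_right (t - s) 0, ht.1]

lemma mul_one_sub_pow_three_sub_nonneg (ht : t ∈ Icc (0 : ℝ) 1) (hs : s ∈ Icc (0 : ℝ) 1) :
    0 ≤ (t * (1 - s)) ^ 3 - max (t - s) 0 ^ 3 :=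
  sub_nonneg.2 (pow_le_pow_left₀ (le_max_right _ _) (max_sub_le_mul_one_sub ht hs) 3)

lemma mul_one_sub_pow_three_sub_le (ht : t ∈ Icc (0 : ℝ) 1) (hs : s ∈ Icc (0 : ℝ) 1) :
    (t * (1 - s)) ^ 3 - max (t - s) 0 ^ 3 ≤ 3 * endWeight t := by
  set x := t * (1 - s)
  set y := max (t - s) 0
  have hy : 0 ≤ y := le_max_right _ _
  have hyx : y ≤ x := max_sub_le_mul_one_sub ht hs
  have hx : x ≤ 1 := mul_le_one₀ ht.2 (by linarith [hs.2]) (by linarith [hs.1])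
  have hsum : x ^ 2 + x * y + y ^ 2 ≤ 3 := by nlinarith
  calc x ^ 3 - y ^ 3 = (x ^ 2 + x * y + y ^ 2) * (x - y) := by ring
    _ ≤ 3 * endWeight t :=
      mul_le_mul hsum (mul_one_sub_sub_max_le ht) (by linarith) (by norm_num)

lemma green_lower (hq : 1 ≤ q) (hδ : 0 ≤ greenDet q) (ht : t ∈ Icc (0 : ℝ) 1)
    (hs : s ∈ Icc (0 : ℝ) 1) :
    jumpWeight 4 q * jumpWeight 5 q / 12 * endWeight s * endWeight t ≤ green q t s := by
  have hslope := greenSlope_nonneg hq hs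
  have hslope' := greenSlope_lower hq hs
  have hcurv := greenCurv_nonneg hq hδ hs
  have ht₀ := ht.1
  have hw := (endWeight_mem_Icc ht).1
  have hcube := mul_one_sub_pow_three_sub_nonneg ht hs
  rw [green_eq_mul_add]
  calc jumpWeight 4 q * jumpWeight 5 q / 12 * endWeight s * endWeight t
      ≤ endWeight t * greenSlope q s := by rw [mul_comm]; gcongr
    _ ≤ endWeight t * ((1 + t) * greenSlope q s + t * greenCurv q s / 2) := by
      gcongr
      have : 0 ≤ t * greenSlope q s + t * greenCurv q s / 2 := by positivity
      linarith
    _ ≤ _ := le_add_of_nonneg_right (by positivity)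

lemma green_upper (hq : 1 ≤ q) (hδ : 0 ≤ greenDet q) (ht : t ∈ Icc (0 : ℝ) 1)
    (hs : s ∈ Icc (0 : ℝ) 1) : green q t s ≤ 4 * endWeight t := by
  have ht₁ := ht.2
  have hslope := greenSlope_nonneg hq hs
  have hslope' := greenSlope_le_one hq hs
  have hcurv := greenCurv_nonneg hq hδ hs
  have hcurv' := greenCurv_le_one hq hδ hs
  have hw := (endWeight_mem_Icc ht).1
  have hδ' := greenDet_le_one hq
  have hcube := mul_one_sub_pow_three_sub_nonneg ht hs
  have hcube' := mul_one_sub_pow_three_sub_le ht hs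
  rw [green_eq_mul_add]
  calc _ ≤ endWeight t * ((1 + 1) * 1 + 1 * 1 / 2) + 1 / 6 * (3 * endWeight t) := by gcongr
    _ ≤ 4 * endWeight t := by linarith

end GreenKernel

section Profile

/-- A profile for the jump `q`: `U = g ^ 3` solves `U⁗ = -greenDet q • U ^ (1 / 3)` on `[0, 1]`
with the boundary conditions encoded by `green q`, and is positive inside. -/
structure IsProfile (q : ℝ) (g : ℝ → ℝ) : Prop where
  continuous : Continuous g
  pos : ∀ t ∈ Ioo (0 : ℝ) 1, 0 < g t
  pow_three_eq : ∀ t ∈ Icc (0 : ℝ) 1, g t ^ 3 = ∫ s in (0 : ℝ)..1, green q t s * g s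

lemma continuousOn_green_left (s : ℝ) :
    ContinuousOn (fun p : ℝ × ℝ => green p.1 p.2 s) (Ici 0 ×ˢ univ) := by
  have comp {f : ℝ → ℝ} (hf : ContinuousOn f (Ici 0)) :
      ContinuousOn (fun p : ℝ × ℝ => f p.1) (Ici 0 ×ˢ univ) :=
    hf.comp continuousOn_fst fun p hp => hp.1
  have := comp continuousOn_greenDet
  have := comp (continuousOn_greenSlope s)
  have := comp (continuousOn_greenCurv s)
  have := comp (continuousOn_greenThird s)
  unfold green
  fun_prop

lemma continuous_green_left {q₀ q₁ : ℝ} (hq₀ : 1 ≤ q₀) (s : ℝ) :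
    Continuous fun p : Icc q₀ q₁ × ℝ => green p.1 p.2 s := by
  have hpair : Continuous fun p : Icc q₀ q₁ × ℝ => ((p.1 : ℝ), p.2) := by fun_prop
  have hmem (p : Icc q₀ q₁ × ℝ) : ((p.1 : ℝ), p.2) ∈ Ici (0 : ℝ) ×ˢ (univ : Set ℝ) :=
    mk_mem_prod (mem_Ici.2 (zero_le_one.trans (hq₀.trans p.1.2.1))) (mem_univ p.2)
  have := (continuousOn_green_left s).comp_continuous hpair hmem
  exact this

@[fun_prop]
lemma continuous_green_right (q t : ℝ) : Continuous (green q t) := by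
  unfold green greenThird greenSlope greenCurv
  fun_prop

lemma isEndWeightKernel_green {q₀ q₁ : ℝ} (hq₀ : 1 ≤ q₀) (hq₁ : 1 ≤ q₁) (hδ : 0 ≤ greenDet q₀) :
    IsEndWeightKernel (jumpWeight 4 q₁ * jumpWeight 5 q₁ / 12) 4
      fun q : Icc q₀ q₁ => green q where
  continuous_left s := continuous_green_left hq₀ s
  continuous_right q := continuous_green_right q
  pos := by
    have h (n : ℕ) := jumpWeight_pos (n := n) (zero_le_one.trans hq₁)
    have h₄ := h 4
    have h₅ := h 5
    positivity
  lower q t ht s hs := by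
    have hq := hq₀.trans q.2.1
    have h (n : ℕ) := jumpWeight_pos (n := n) (zero_le_one.trans hq₁)
    have h' (n : ℕ) := jumpWeight_anti (n := n) (zero_le_one.trans hq) q.2.2
    have hs₀ := (endWeight_mem_Icc hs).1
    have ht₀ := (endWeight_mem_Icc ht).1
    refine le_trans ?_ (green_lower hq (hδ.trans (greenDet_mono hq₀ q.2.1)) ht hs)
    have := mul_le_mul (h' 4) (h' 5) (h 5).le ((h 4).le.trans (h' 4))
    gcongr
  upper q t ht s hs := green_upper (hq₀.trans q.2.1) (hδ.trans (greenDet_mono hq₀ q.2.1)) ht hs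

theorem exists_continuous_isProfile {q₀ q₁ : ℝ} (hq₀ : 1 ≤ q₀) (hq₁ : 1 ≤ q₁)
    (hδ : 0 ≤ greenDet q₀) :
    ∃ g : Icc q₀ q₁ → ℝ → ℝ, Continuous (fun p : Icc q₀ q₁ × ℝ => g p.1 p.2) ∧
      ∀ q : Icc q₀ q₁, IsProfile q (g q) := by
  obtain ⟨g, hg, hpos, heq⟩ :=
    (isEndWeightKernel_green hq₀ hq₁ hδ).exists_pow_eq_integral_mul (n := 3) (by norm_num)
  exact ⟨g, hg, fun q => ⟨by fun_prop, hpos q, heq q⟩⟩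

lemma mul_max_sub_le_mul_max_sub {x t s : ℝ} (hx : 0 ≤ x) (hs : 0 ≤ s) (hxt : x ≤ t) :
    t * max (x - s) 0 ≤ x * max (t - s) 0 := by
  rcases le_total (x - s) 0 with h | h
  · rw [max_eq_right h, mul_zero]
    positivity
  · rw [max_eq_left h, max_eq_left (by linarith)]
    nlinarith

-- The function `green q t s / t ^ 3` of `t` is nonincreasing, a sum of nonincreasing terms.
lemma pow_three_mul_green_le {q x t s : ℝ} (hq : 1 ≤ q) (hδ : 0 ≤ greenDet q) (hx : 0 ≤ x)
    (hxt : x ≤ t) (hs : s ∈ Icc (0 : ℝ) 1) : x ^ 3 * green q t s ≤ t ^ 3 * green q x s := by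
  have ha := greenSlope_nonneg hq hs
  have hb := greenCurv_nonneg hq hδ hs
  have ht := hx.trans hxt
  have hlin : x ^ 3 * t ≤ t ^ 3 * x := by
    calc x ^ 3 * t = x * t * x ^ 2 := by ring
      _ ≤ x * t * t ^ 2 := by gcongr
      _ = t ^ 3 * x := by ring
  have hquad : x ^ 3 * t ^ 2 ≤ t ^ 3 * x ^ 2 := by
    calc x ^ 3 * t ^ 2 = x ^ 2 * t ^ 2 * x := by ring
      _ ≤ x ^ 2 * t ^ 2 * t := by gcongr
      _ = t ^ 3 * x ^ 2 := by ring
  have hmax : (t * max (x - s) 0) ^ 3 ≤ (x * max (t - s) 0) ^ 3 := by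
    have := mul_max_sub_le_mul_max_sub hx hs.1 hxt
    have := le_max_right (x - s) 0
    gcongr
  have := mul_le_mul_of_nonneg_left hlin ha
  have := mul_le_mul_of_nonneg_left hquad hb
  have := mul_le_mul_of_nonneg_left hmax hδ
  unfold green
  linarith

variable {q : ℝ} {g : ℝ → ℝ}

lemma IsProfile.antitoneOn_div (hg : IsProfile q g) (hq : 1 ≤ q) (hδ : 0 ≤ greenDet q) :
    AntitoneOn (fun t => g t / t) (Ioo 0 1) := by
  intro x hx t ht hxt
  have hg_cont := hg.continuous
  have hcube : (x * g t) ^ 3 ≤ (t * g x) ^ 3 := by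
    rw [mul_pow, mul_pow, hg.pow_three_eq t (Ioo_subset_Icc_self ht),
      hg.pow_three_eq x (Ioo_subset_Icc_self hx), ← intervalIntegral.integral_const_mul,
      ← intervalIntegral.integral_const_mul]
    refine intervalIntegral.integral_mono_on_of_le_Ioo zero_le_one
      (Continuous.intervalIntegrable (by fun_prop) _ _)
      (Continuous.intervalIntegrable (by fun_prop) _ _) fun s hs => ?_
    rw [← mul_assoc, ← mul_assoc]
    exact mul_le_mul_of_nonneg_right
      (pow_three_mul_green_le hq hδ hx.1.le hxt (Ioo_subset_Icc_self hs)) (hg.pos s hs).le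
  have hgx := hg.pos x hx
  have hmul : x * g t ≤ t * g x :=
    le_of_pow_le_pow_left₀ three_ne_zero (mul_nonneg ht.1.le hgx.le) hcube
  have hx₀ := hx.1
  have ht₀ := ht.1
  rw [div_le_div_iff₀ ht₀ hx₀]
  linarith

end Profile

section Shooting

lemma div_mul_integral_le_integral_mul_of_antitoneOn {a b z : ℝ} {m g h : ℝ → ℝ} (hab : a ≤ b)
    (hm : Continuous m) (hg : Continuous g) (hh : Continuous h) (hz : z ∈ Ioo a b)
    (hcross : ∀ s ∈ Ioo a b, 0 ≤ (z - s) * m s) (hpos : ∀ s ∈ Ioo a b, 0 < h s)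
    (hanti : AntitoneOn (fun s => g s / h s) (Ioo a b)) :
    g z / h z * ∫ s in a..b, m s * h s ≤ ∫ s in a..b, m s * g s := by
  rw [← intervalIntegral.integral_const_mul]
  refine intervalIntegral.integral_mono_on_of_le_Ioo hab
    (Continuous.intervalIntegrable (by fun_prop) _ _)
    (Continuous.intervalIntegrable (by fun_prop) _ _) fun s hs => ?_
  have hratio : g z / h z * m s ≤ g s / h s * m s := by
    rcases lt_trichotomy s z with hsz | rfl | hzs
    · have : 0 ≤ m s := nonneg_of_mul_nonneg_right (hcross s hs) (sub_pos.2 hsz)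
      exact mul_le_mul_of_nonneg_right (hanti hs hz hsz.le) this
    · rfl
    · have : m s ≤ 0 := nonpos_of_mul_nonneg_right (hcross s hs) (sub_neg.2 hzs)
      exact mul_le_mul_of_nonpos_right (hanti hz hs hzs.le) this
  calc g z / h z * (m s * h s) = g z / h z * m s * h s := by ring
    _ ≤ g s / h s * m s * h s := mul_le_mul_of_nonneg_right hratio (hpos s hs).le
    _ = m s * g s := by field_simp [(hpos s hs).ne']

@[fun_prop]
lemma continuous_shootingWeight (q : ℝ) : Continuous (shootingWeight q) := by
  unfold shootingWeight greenThird greenSlope greenCurv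
  fun_prop

lemma shootingWeight_three (s : ℝ) : shootingWeight 3 s =
    42831 / 10004 - 68607 / 5002 * s + 1701 / 122 * s ^ 2 - 14 / 3 * s ^ 3 := by
  unfold shootingWeight
  rw [greenThird_eq_cubic]
  norm_num [greenDet, jumpWeight]
  ring

lemma exists_shootingWeight_three_eq_zero :
    ∃ z ∈ Ioo (0 : ℝ) (7 / 10), shootingWeight 3 z = 0 := by
  refine intermediate_value_Ioo' (by norm_num) (continuous_shootingWeight 3).continuousOn ?_
  constructor <;> norm_num [shootingWeight_three]

lemma sub_mul_shootingWeight_three_nonneg {z s : ℝ} (hz : z ≤ 7 / 10) (hs : s ≤ 1)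
    (h : shootingWeight 3 z = 0) : 0 ≤ (z - s) * shootingWeight 3 s := by
  have hquot : 0 ≤ 68607 / 5002 - 1701 / 122 * (s + z) + 14 / 3 * (s ^ 2 + s * z + z ^ 2) := by
    nlinarith [sq_nonneg (s - z), sq_nonneg (s + z - 17 / 10)]
  calc 0 ≤ (z - s) ^ 2 *
        (68607 / 5002 - 1701 / 122 * (s + z) + 14 / 3 * (s ^ 2 + s * z + z ^ 2)) := by positivity
    _ = (z - s) * (shootingWeight 3 s - shootingWeight 3 z) := by
      rw [shootingWeight_three, shootingWeight_three]; ring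
    _ = (z - s) * shootingWeight 3 s := by rw [h, sub_zero]

lemma integral_shootingWeight_three_mul_id_pos : 0 < ∫ s in (0 : ℝ)..1, shootingWeight 3 s * s := by
  have (s : ℝ) : shootingWeight 3 s * s =
      42831 / 10004 * s ^ 1 - 68607 / 5002 * s ^ 2 + 1701 / 122 * s ^ 3 - 14 / 3 * s ^ 4 := by
    rw [shootingWeight_three]; ring
  simp only [this]
  have i (c : ℝ) (n : ℕ) : IntervalIntegrable (fun s : ℝ => c * s ^ n) volume 0 1 :=
    Continuous.intervalIntegrable (by fun_prop) _ _
  rw [intervalIntegral.integral_sub (((i _ _).sub (i _ _)).add (i _ _)) (i _ _),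
    intervalIntegral.integral_add ((i _ _).sub (i _ _)) (i _ _),
    intervalIntegral.integral_sub (i _ _) (i _ _)]
  simp only [intervalIntegral.integral_const_mul, integral_pow]
  norm_num

variable {q : ℝ} {g : ℝ → ℝ}

lemma IsProfile.integral_shootingWeight_three_mul_pos (hg : IsProfile 3 g) :
    0 < ∫ s in (0 : ℝ)..1, shootingWeight 3 s * g s := by
  obtain ⟨z, hz, hz_zero⟩ := exists_shootingWeight_three_eq_zero
  have hz' : z ∈ Ioo (0 : ℝ) 1 := ⟨hz.1, by linarith [hz.2]⟩
  have hδ : 0 ≤ greenDet 3 := by norm_num [greenDet, jumpWeight]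
  have hratio : 0 < g z / z := div_pos (hg.pos z hz') hz.1
  refine (mul_pos hratio integral_shootingWeight_three_mul_id_pos).trans_le ?_
  exact div_mul_integral_le_integral_mul_of_antitoneOn zero_le_one (continuous_shootingWeight 3)
    hg.continuous continuous_id hz'
    (fun s hs => sub_mul_shootingWeight_three_nonneg hz.2.le hs.2.le hz_zero)
    (fun s hs => hs.1) (hg.antitoneOn_div (by norm_num) hδ)

lemma IsProfile.integral_shootingWeight_mul_neg (hg : IsProfile q g) (hq : 1 ≤ q)
    (hδ : greenDet q = 0) : ∫ s in (0 : ℝ)..1, shootingWeight q s * g s < 0 := by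
  have hg_cont := hg.continuous
  rw [← neg_pos, ← intervalIntegral.integral_neg]
  refine intervalIntegral.intervalIntegral_pos_of_pos_on
    (Continuous.intervalIntegrable (by fun_prop) _ _) (fun s hs => ?_) one_pos
  have hw := endWeight_pos hs
  have hgs := hg.pos s hs
  have hbracket : 0 < (2 - s) / 6 - jumpWeight 5 q / 2 := by
    linarith [hs.2, jumpWeight_five_le_third hq hδ.ge]
  calc 0 < (1 + q ^ 3) * (endWeight s * ((2 - s) / 6 - jumpWeight 5 q / 2)) * g s := by positivity
    _ = -(shootingWeight q s * g s) := by
      rw [shootingWeight, greenThird_eq_sub_mul, hδ]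
      ring

lemma continuous_shootingWeight_uncurry {q₀ q₁ : ℝ} (hq₀ : 1 ≤ q₀) :
    Continuous fun p : Icc q₀ q₁ × ℝ => shootingWeight p.1 p.2 := by
  have comp {f : ℝ → ℝ} (hf : ContinuousOn f (Ici 0)) :
      Continuous fun p : Icc q₀ q₁ × ℝ => f p.1 :=
    hf.comp_continuous (by fun_prop) fun p => mem_Ici.2 (zero_le_one.trans (hq₀.trans p.1.2.1))
  have := comp continuousOn_greenDet
  have := comp (continuousOn_jumpWeight (n := 4))
  have := comp (continuousOn_jumpWeight (n := 5))
  simp only [shootingWeight, greenThird_eq_cubic]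
  fun_prop

lemma one_lt_of_greenDet_pos (hq : 1 ≤ q) (hδ : 0 < greenDet q) : 1 < q := by
  refine hq.lt_of_ne' ?_
  rintro rfl
  norm_num [greenDet, jumpWeight] at hδ

theorem exists_isProfile_integral_shootingWeight_mul_eq_zero :
    ∃ q : ℝ, 1 < q ∧ 0 < greenDet q ∧
      ∃ g, IsProfile q g ∧ ∫ s in (0 : ℝ)..1, shootingWeight q s * g s = 0 := by
  obtain ⟨q₀, ⟨hq₀, hq₀_le⟩, hδ₀⟩ := exists_greenDet_eq_zero
  obtain ⟨g, hg_cont, hg⟩ := exists_continuous_isProfile (q₁ := 3) hq₀ (by norm_num) hδ₀.ge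
  let J (q : Icc q₀ 3) : ℝ := ∫ s in (0 : ℝ)..1, shootingWeight q s * g q s
  have hJ : Continuous J := by
    have := (continuous_shootingWeight_uncurry hq₀).mul hg_cont
    exact intervalIntegral.continuous_parametric_intervalIntegral_of_continuous' this _ _
  have : PreconnectedSpace (Icc q₀ 3) := Subtype.preconnectedSpace isPreconnected_Icc
  let left : Icc q₀ 3 := ⟨q₀, le_rfl, hq₀_le⟩
  let right : Icc q₀ 3 := ⟨3, hq₀_le, le_rfl⟩
  have hJ_left : J left < 0 := (hg left).integral_shootingWeight_mul_neg hq₀ hδ₀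
  have hJ_right : 0 < J right := (hg right).integral_shootingWeight_three_mul_pos
  obtain ⟨q, hq⟩ := mem_range_of_exists_le_of_exists_ge hJ ⟨left, hJ_left.le⟩ ⟨right, hJ_right.le⟩
  have hq₁ : 1 ≤ (q : ℝ) := hq₀.trans q.2.1
  have hδ : 0 < greenDet q := (hδ₀.ge.trans (greenDet_mono hq₀ q.2.1)).lt_of_ne' fun h =>
    ((hg q).integral_shootingWeight_mul_neg hq₁ h).ne hq
  exact ⟨q, one_lt_of_greenDet_pos hq₁ hδ, hδ, g q, hg q, hq⟩

end Shooting

section TruncatedPower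

variable {g : ℝ → ℝ} {a b t : ℝ}

lemma integral_sub_pow_succ_mul (hg : Continuous g) (n : ℕ) (a t : ℝ) :
    ∫ s in a..t, (t - s) ^ (n + 1) * g s =
      (n + 1) * ∫ s in a..t, (t - s) ^ n * ∫ x in a..s, g x := by
  have hpow (s : ℝ) : HasDerivAt (fun s => (t - s) ^ (n + 1)) (-((n + 1) * (t - s) ^ n)) s := by
    refine (((hasDerivAt_id' s).const_sub t).fun_pow (n + 1)).congr_deriv ?_
    push_cast
    simp
  have hprim (s : ℝ) : HasDerivAt (fun s => ∫ x in a..s, g x) (g s) s :=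
    (hg.integral_hasStrictDerivAt a s).hasDerivAt
  rw [intervalIntegral.integral_mul_deriv_eq_deriv_mul_of_hasDerivAt
    (fun s _ => (hpow s).continuousAt.continuousWithinAt)
    (fun s _ => (hprim s).continuousAt.continuousWithinAt) (fun s _ => hpow s) (fun s _ => hprim s)
    (Continuous.intervalIntegrable (by fun_prop) _ _) (hg.intervalIntegrable _ _)]
  simp [← intervalIntegral.integral_const_mul, mul_assoc]

lemma hasDerivAt_integral_sub_pow_succ_mul (hg : Continuous g) (n : ℕ) (a t : ℝ) :
    HasDerivAt (fun t => ∫ s in a..t, (t - s) ^ (n + 1) * g s)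
      ((n + 1) * ∫ s in a..t, (t - s) ^ n * g s) t := by
  have hprim : Continuous fun s => ∫ x in a..s, g x :=
    intervalIntegral.continuous_primitive (fun _ _ => hg.intervalIntegrable _ _) a
  induction n generalizing g with
  | zero =>
    simp only [integral_sub_pow_succ_mul hg]
    simpa using (hprim.integral_hasStrictDerivAt a t).hasDerivAt
  | succ n ih =>
    simp only [integral_sub_pow_succ_mul hg]
    exact (ih hprim (intervalIntegral.continuous_primitive
      (fun _ _ => hprim.intervalIntegrable _ _) a)).const_mul _

lemma integral_max_sub_pow_mul (hg : Continuous g) {n : ℕ} (hn : n ≠ 0) (hat : a ≤ t)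
    (htb : t ≤ b) :
    ∫ s in a..b, max (t - s) 0 ^ n * g s = ∫ s in a..t, (t - s) ^ n * g s := by
  have hint (a b : ℝ) : IntervalIntegrable (fun s => max (t - s) 0 ^ n * g s) volume a b :=
    Continuous.intervalIntegrable (by fun_prop) _ _
  have hleft : ∫ s in a..t, max (t - s) 0 ^ n * g s = ∫ s in a..t, (t - s) ^ n * g s :=
    intervalIntegral.integral_congr fun s hs => by
      rw [uIcc_of_le hat] at hs
      simp only [max_eq_left (sub_nonneg.2 hs.2)]
  have hright : ∫ s in t..b, max (t - s) 0 ^ n * g s = ∫ _ in t..b, (0 : ℝ) :=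
    intervalIntegral.integral_congr fun s hs => by
      rw [uIcc_of_le htb] at hs
      simp only [max_eq_right (sub_nonpos.2 hs.1), zero_pow hn, zero_mul]
  rw [← intervalIntegral.integral_add_adjacent_intervals (hint a t) (hint t b), hleft, hright]
  simp

end TruncatedPower

section GreenJet

/-- The integral `∫ k s * g s` over `[0, 1]` of a density `g` against a kernel coefficient `k`. -/
noncomputable def moment (k g : ℝ → ℝ) : ℝ := ∫ s in (0 : ℝ)..1, k s * g s

/-- The derivatives of orders `0, …, 4` of `t ↦ ∫ green q t s * g s`, written as explicit functions
of `t` on the whole line; orders above `4` are not used. -/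
noncomputable def greenJet (q : ℝ) (g : ℝ → ℝ) : ℕ → ℝ → ℝ
  | 0, t => moment (greenSlope q) g * t + moment (greenCurv q) g * t ^ 2 / 2
      + moment (greenThird q) g * t ^ 3 / 6 - greenDet q / 6 * ∫ s in (0 : ℝ)..t, (t - s) ^ 3 * g s
  | 1, t => moment (greenSlope q) g + moment (greenCurv q) g * t
      + moment (greenThird q) g * t ^ 2 / 2 - greenDet q / 2 * ∫ s in (0 : ℝ)..t, (t - s) ^ 2 * g s
  | 2, t => moment (greenCurv q) g + moment (greenThird q) g * t
      - greenDet q * ∫ s in (0 : ℝ)..t, (t - s) ^ 1 * g s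
  | 3, t => moment (greenThird q) g - greenDet q * ∫ s in (0 : ℝ)..t, (t - s) ^ 0 * g s
  | _, t => -greenDet q * g t

variable {q : ℝ} {g : ℝ → ℝ}

lemma hasDerivAt_greenJet (q : ℝ) (hg : Continuous g) {j : ℕ} (hj : j < 4) (t : ℝ) :
    HasDerivAt (greenJet q g j) (greenJet q g (j + 1) t) t := by
  have hR (n : ℕ) := hasDerivAt_integral_sub_pow_succ_mul hg n 0 t
  have hR₀ := (hg.integral_hasStrictDerivAt 0 t).hasDerivAt
  have hid := hasDerivAt_id' t
  have hpow (n : ℕ) := hasDerivAt_pow n t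
  set a := moment (greenSlope q) g
  set b := moment (greenCurv q) g
  set c := moment (greenThird q) g
  set δ := greenDet q
  interval_cases j
  · refine ((((hid.const_mul a).add (((hpow 2).const_mul b).div_const 2)).add
      (((hpow 3).const_mul c).div_const 6)).sub ((hR 2).const_mul (δ / 6))).congr_deriv ?_
    simp only [greenJet]
    push_cast
    ring
  · refine ((((hid.const_mul b).const_add a).add (((hpow 2).const_mul c).div_const 2)).sub
      ((hR 1).const_mul (δ / 2))).congr_deriv ?_
    simp only [greenJet]
    push_cast
    ring
  · refine (((hid.const_mul c).const_add b).sub ((hR 0).const_mul δ)).congr_deriv ?_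
    simp [greenJet, c, δ]
  · have hthird : greenJet q g 3 = fun t => c - δ * ∫ s in (0 : ℝ)..t, g s := by
      funext t
      simp [greenJet, c, δ]
    rw [hthird]
    exact ((hR₀.const_mul δ).const_sub c).congr_deriv (neg_mul _ _).symm

lemma moment_linear_combination {k₁ k₂ k₃ k₄ k : ℝ → ℝ} (a b c d : ℝ) (hk₁ : Continuous k₁)
    (hk₂ : Continuous k₂) (hk₃ : Continuous k₃) (hk₄ : Continuous k₄) (hg : Continuous g)
    (hk : ∀ s, k s = a * k₁ s + b * k₂ s + c * k₃ s + d * k₄ s) :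
    moment k g = a * moment k₁ g + b * moment k₂ g + c * moment k₃ g + d * moment k₄ g := by
  have hint {f : ℝ → ℝ} (hf : Continuous f) (e : ℝ) :
      IntervalIntegrable (fun s => e * (f s * g s)) volume 0 1 :=
    Continuous.intervalIntegrable (by fun_prop) _ _
  have hsplit (s : ℝ) : k s * g s =
      a * (k₁ s * g s) + b * (k₂ s * g s) + c * (k₃ s * g s) + d * (k₄ s * g s) := by
    rw [hk]; ring
  simp only [moment, hsplit, ← intervalIntegral.integral_const_mul]
  rw [intervalIntegral.integral_add (((hint hk₁ a).add (hint hk₂ b)).add (hint hk₃ c)) (hint hk₄ d),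
    intervalIntegral.integral_add ((hint hk₁ a).add (hint hk₂ b)) (hint hk₃ c),
    intervalIntegral.integral_add (hint hk₁ a) (hint hk₂ b)]

lemma moment_green_combination {k f : ℝ → ℝ} (a b c d : ℝ) (hf : Continuous f) (hg : Continuous g)
    (hk : ∀ s, k s = a * greenSlope q s + b * greenCurv q s + c * greenThird q s + d * f s) :
    moment k g = a * moment (greenSlope q) g + b * moment (greenCurv q) g
      + c * moment (greenThird q) g + d * moment f g :=
  moment_linear_combination a b c d (by unfold greenSlope; fun_prop) (by unfold greenCurv; fun_prop)
    (by unfold greenThird greenSlope greenCurv; fun_prop) hf hg hk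

lemma greenJet_zero_eq_integral (hg : Continuous g) {t : ℝ} (ht : t ∈ Icc (0 : ℝ) 1) :
    greenJet q g 0 t = ∫ s in (0 : ℝ)..1, green q t s * g s := by
  have hmoment := moment_green_combination (q := q) (k := green q t)
    (f := fun s => max (t - s) 0 ^ 3) t (t ^ 2 / 2) (t ^ 3 / 6) (-greenDet q / 6) (by fun_prop) hg
    fun s => by unfold green; ring
  have htrunc : moment (fun s => max (t - s) 0 ^ 3) g = ∫ s in (0 : ℝ)..t, (t - s) ^ 3 * g s :=
    integral_max_sub_pow_mul hg three_ne_zero ht.1 ht.2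
  rw [htrunc] at hmoment
  rw [← moment, hmoment, greenJet]
  ring

lemma greenJet_zero_at_one (q : ℝ) (hg : Continuous g) : greenJet q g 0 1 = 0 := by
  have := moment_green_combination (q := q) (k := 0) (f := fun s => (1 - s) ^ 3)
    1 (1 / 2) (1 / 6) (-greenDet q / 6) (by fun_prop) hg
    fun s => by simp only [greenThird, Pi.zero_apply]; ring
  simp only [moment, Pi.zero_apply, zero_mul, intervalIntegral.integral_zero] at this
  simp only [greenJet, moment]
  linarith

lemma greenJet_one_at_one (hq : 0 ≤ q) (hg : Continuous g) :
    greenJet q g 1 1 = -q ^ 5 * moment (greenSlope q) g := by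
  have := moment_green_combination (q := q) (k := 0) (f := fun s => (1 - s) ^ 2)
    (1 + q ^ 5) 1 (1 / 2) (-greenDet q / 2) (by fun_prop) hg
    fun s => by rw [Pi.zero_apply]; linear_combination -greenSlope_jump (s := s) hq
  simp only [moment, Pi.zero_apply, zero_mul, intervalIntegral.integral_zero] at this
  simp only [greenJet, moment]
  linarith

lemma greenJet_two_at_one (hq : 0 ≤ q) (hg : Continuous g) :
    greenJet q g 2 1 = -q ^ 4 * moment (greenCurv q) g := by
  have := moment_green_combination (q := q) (k := 0) (f := fun s => (1 - s) ^ 1)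
    0 (1 + q ^ 4) 1 (-greenDet q) (by fun_prop) hg
    fun s => by rw [Pi.zero_apply]; linear_combination -greenCurv_jump (s := s) hq
  simp only [moment, Pi.zero_apply, zero_mul, intervalIntegral.integral_zero] at this
  simp only [greenJet, moment]
  linarith

lemma greenJet_three_at_one (hg : Continuous g)
    (hshoot : ∫ s in (0 : ℝ)..1, shootingWeight q s * g s = 0) :
    greenJet q g 3 1 = -q ^ 3 * moment (greenThird q) g := by
  have := moment_green_combination (q := q) (k := shootingWeight q) (f := fun s => (1 - s) ^ 0)
    0 0 (1 + q ^ 3) (-greenDet q) (by fun_prop) hg fun s => by unfold shootingWeight; ring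
  rw [moment, hshoot] at this
  simp only [greenJet, moment] at this ⊢
  linarith

theorem greenJet_at_one (hq : 0 ≤ q) (hg : Continuous g)
    (hshoot : ∫ s in (0 : ℝ)..1, shootingWeight q s * g s = 0) {j : ℕ} (hj : j < 4) :
    greenJet q g j 1 = -q ^ (6 - j) * greenJet q g j 0 := by
  interval_cases j
  · rw [greenJet_zero_at_one q hg]; simp [greenJet]
  · rw [greenJet_one_at_one hq hg]; simp [greenJet]
  · rw [greenJet_two_at_one hq hg]; simp [greenJet]
  · rw [greenJet_three_at_one hg hshoot]; simp [greenJet]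

end GreenJet

section SignedCbrt

/-- The odd real cube root `sign x * |x| ^ (1 / 3)`, the nonlinearity of the equation. -/
noncomputable def signedCbrt (x : ℝ) : ℝ := Real.sign x * |x| ^ ((1 : ℝ) / 3)

lemma signedCbrt_odd : Function.Odd signedCbrt := fun x => by
  simp [signedCbrt, Real.sign_neg]

lemma signedCbrt_pow_three (x : ℝ) : signedCbrt (x ^ 3) = x := by
  have hroot {y : ℝ} (hy : 0 ≤ y) : signedCbrt (y ^ 3) = y := by
    rcases hy.eq_or_lt with rfl | hy
    · simp [signedCbrt]
    · rw [signedCbrt, Real.sign_of_pos (by positivity), one_mul, abs_of_pos (by positivity),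
        ← Real.rpow_natCast, ← Real.rpow_mul hy.le]
      norm_num
  rcases le_total 0 x with hx | hx
  · exact hroot hx
  · have := hroot (neg_nonneg.2 hx)
    rwa [Odd.neg_pow (by decide), signedCbrt_odd, neg_inj] at this

lemma continuous_signedCbrt : Continuous signedCbrt := by
  have hsplit : signedCbrt =
      fun x => max x 0 ^ ((1 : ℝ) / 3) - max (-x) 0 ^ ((1 : ℝ) / 3) := by
    funext x
    rcases lt_trichotomy x 0 with hx | rfl | hx
    · rw [signedCbrt, Real.sign_of_neg hx, abs_of_neg hx, max_eq_right hx.le,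
        max_eq_left (neg_nonneg.2 hx.le), Real.zero_rpow (by norm_num)]
      ring
    · simp [signedCbrt]
    · rw [signedCbrt, Real.sign_of_pos hx, abs_of_pos hx, max_eq_left hx.le,
        max_eq_right (neg_nonpos.2 hx.le), Real.zero_rpow (by norm_num)]
      ring
  rw [hsplit]
  exact ((continuous_id.max continuous_const).rpow_const fun _ => Or.inr (by norm_num)).sub
    ((continuous_neg.max continuous_const).rpow_const fun _ => Or.inr (by norm_num))

end SignedCbrt

section AntiperiodicExtension

/-- The extension of `f` from `[0, T)` to the line that changes sign under translation by `T`. -/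
noncomputable def antiperiodicExtension (T : ℝ) (f : ℝ → ℝ) (s : ℝ) : ℝ :=
  (-1) ^ ⌊s / T⌋ * f (s - ⌊s / T⌋ * T)

variable {T : ℝ} {f f' : ℝ → ℝ}

lemma antiperiodic_antiperiodicExtension (hT : T ≠ 0) (f : ℝ → ℝ) :
    Function.Antiperiodic (antiperiodicExtension T f) T := fun s => by
  have hfloor : ⌊(s + T) / T⌋ = ⌊s / T⌋ + 1 := by rw [add_div, div_self hT, Int.floor_add_one]
  have harg : s + T - (⌊s / T⌋ + 1 : ℤ) * T = s - ⌊s / T⌋ * T := by push_cast; ring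
  rw [antiperiodicExtension, antiperiodicExtension, hfloor, harg, zpow_add_one₀ (by norm_num)]
  ring

lemma antiperiodicExtension_eq_on_cell (hT : 0 < T) (hf : f T = -f 0) (n : ℤ) {s : ℝ}
    (hs : s ∈ Icc (n * T) ((n + 1) * T)) :
    antiperiodicExtension T f s = (-1) ^ n * f (s - n * T) := by
  rcases hs.2.lt_or_eq with h | rfl
  · have hfloor : ⌊s / T⌋ = n :=
      Int.floor_eq_iff.2 ⟨(le_div_iff₀ hT).2 hs.1, (div_lt_iff₀ hT).2 h⟩
    rw [antiperiodicExtension, hfloor]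
  · have hfloor : ⌊(n + 1) * T / T⌋ = n + 1 := by
      rw [mul_div_cancel_right₀ _ hT.ne']
      exact_mod_cast Int.floor_intCast (n + 1)
    have hzero : (n + 1) * T - (n + 1 : ℤ) * T = 0 := by push_cast; ring
    have hend : (n + 1) * T - n * T = T := by ring
    rw [antiperiodicExtension, hfloor, hzero, hend, hf, zpow_add_one₀ (by norm_num)]
    ring

lemma antiperiodicExtension_of_mem_Icc (hT : 0 < T) (hf : f T = -f 0) {s : ℝ}
    (hs : s ∈ Icc 0 T) : antiperiodicExtension T f s = f s := by
  simpa using antiperiodicExtension_eq_on_cell hT hf 0 (s := s) (by simpa using hs)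

lemma antiperiodicExtension_comp {F g : ℝ → ℝ} (hF : Function.Odd F) (hT : 0 < T)
    (hfg : ∀ s ∈ Icc 0 T, g s = F (f s)) (s : ℝ) :
    antiperiodicExtension T g s = F (antiperiodicExtension T f s) := by
  have hsmem : s - ⌊s / T⌋ * T ∈ Icc 0 T :=
    ⟨sub_nonneg.2 ((le_div_iff₀ hT).1 (Int.floor_le _)),
      by linarith [(div_lt_iff₀ hT).1 (Int.lt_floor_add_one (s / T))]⟩
  rw [antiperiodicExtension, antiperiodicExtension, hfg _ hsmem]
  rcases Int.even_or_odd ⌊s / T⌋ with h | h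
  · rw [h.neg_one_zpow, one_mul, one_mul]
  · rw [h.neg_one_zpow, neg_one_mul, neg_one_mul, hF]

lemma hasDerivWithinAt_antiperiodicExtension (hT : 0 < T) (hderiv : ∀ s, HasDerivAt f (f' s) s)
    (hf : f T = -f 0) (hf' : f' T = -f' 0) (n : ℤ) {s : ℝ}
    (hs : s ∈ Icc (n * T) ((n + 1) * T)) :
    HasDerivWithinAt (antiperiodicExtension T f) (antiperiodicExtension T f' s)
      (Icc (n * T) ((n + 1) * T)) s := by
  rw [antiperiodicExtension_eq_on_cell hT hf' n hs]
  have hcell : HasDerivAt (fun x => (-1) ^ n * f (x - n * T)) ((-1) ^ n * f' (s - n * T)) s :=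
    ((hderiv (s - n * T)).comp_sub_const s (n * T)).const_mul _
  exact hcell.hasDerivWithinAt.congr (fun x hx => antiperiodicExtension_eq_on_cell hT hf n hx)
    (antiperiodicExtension_eq_on_cell hT hf n hs)

theorem hasDerivAt_antiperiodicExtension (hT : 0 < T) (hderiv : ∀ s, HasDerivAt f (f' s) s)
    (hf : f T = -f 0) (hf' : f' T = -f' 0) (s : ℝ) :
    HasDerivAt (antiperiodicExtension T f) (antiperiodicExtension T f' s) s := by
  have hfloor_le : ⌊s / T⌋ * T ≤ s := (le_div_iff₀ hT).1 (Int.floor_le _)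
  have hlt_floor : s < (⌊s / T⌋ + 1) * T := (div_lt_iff₀ hT).1 (Int.lt_floor_add_one _)
  have hright := hasDerivWithinAt_antiperiodicExtension hT hderiv hf hf' ⌊s / T⌋
    ⟨hfloor_le, hlt_floor.le⟩
  rcases hfloor_le.lt_or_eq with h | h
  · exact hright.hasDerivAt (Icc_mem_nhds h hlt_floor)
  · have hleft := hasDerivWithinAt_antiperiodicExtension hT hderiv hf hf' (⌊s / T⌋ - 1) (s := s)
      ⟨by push_cast; nlinarith, by push_cast; nlinarith⟩
    refine (hleft.union hright).hasDerivAt ?_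
    filter_upwards [Icc_mem_nhds (a := s - T) (by linarith) hlt_floor] with x hx
    rcases le_total x s with hxs | hxs
    · exact Or.inl ⟨by push_cast; linarith [hx.1], by push_cast; linarith⟩
    · exact Or.inr ⟨by linarith, hx.2⟩

end AntiperiodicExtension

section DerivativeChain

variable {f : ℕ → ℝ → ℝ} {n : ℕ}

lemma iteratedDeriv_eq_of_hasDerivAt (hf : ∀ j < n, ∀ s, HasDerivAt (f j) (f (j + 1) s) s) {k : ℕ}
    (hk : k ≤ n) : iteratedDeriv k (f 0) = f k := by
  induction k with
  | zero => exact iteratedDeriv_zero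
  | succ k ih =>
    rw [iteratedDeriv_succ, ih (Nat.le_of_succ_le hk)]
    exact funext fun s => (hf k hk s).deriv

lemma contDiff_of_hasDerivAt (hf : ∀ j < n, ∀ s, HasDerivAt (f j) (f (j + 1) s) s)
    (hcont : Continuous (f n)) : ContDiff ℝ n (f 0) := by
  refine contDiff_nat_iff_iteratedDeriv.2 ⟨fun m hm => ?_, fun m hm => ?_⟩
  · rw [iteratedDeriv_eq_of_hasDerivAt hf hm]
    rcases hm.lt_or_eq with hm | rfl
    · exact continuous_iff_continuousAt.2 fun s => (hf m hm s).continuousAt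
    · exact hcont
  · rw [iteratedDeriv_eq_of_hasDerivAt hf hm.le]
    exact fun s => (hf m hm s).differentiableAt

end DerivativeChain

/-- The relations `e (j + 1) = (D + 6 - j) (e j)` for `j < 4`, where `D = d/ds`; they say that
`e 4 = (D + 3) (D + 4) (D + 5) (D + 6) (e 0)`. Entries of `e` beyond `e 4` are irrelevant. -/
def IsFactorChain (e : ℕ → ℝ → ℝ) : Prop :=
  ∀ j < 4, ∀ s, HasDerivAt (e j) ((j - 6 : ℝ) * e j s + e (j + 1) s) s

namespace IsFactorChain

/-- The derivatives of `e 0` of orders `0, …, 4` along a factor chain `e`; orders above `4` are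
not used. -/
def derivatives (e : ℕ → ℝ → ℝ) : ℕ → ℝ → ℝ
  | 0, s => e 0 s
  | 1, s => -6 * e 0 s + e 1 s
  | 2, s => 36 * e 0 s - 11 * e 1 s + e 2 s
  | 3, s => -216 * e 0 s + 91 * e 1 s - 15 * e 2 s + e 3 s
  | _, s => 1296 * e 0 s - 671 * e 1 s + 151 * e 2 s - 18 * e 3 s + e 4 s

variable {e : ℕ → ℝ → ℝ}

lemma continuous (he : IsFactorChain e) {j : ℕ} (hj : j < 4) : Continuous (e j) :=
  continuous_iff_continuousAt.2 fun s => (he j hj s).continuousAt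

lemma hasDerivAt_derivatives (he : IsFactorChain e) {j : ℕ} (hj : j < 4) (s : ℝ) :
    HasDerivAt (derivatives e j) (derivatives e (j + 1) s) s := by
  have h₀ := he 0 (by norm_num) s
  have h₁ := he 1 (by norm_num) s
  have h₂ := he 2 (by norm_num) s
  have h₃ := he 3 (by norm_num) s
  interval_cases j
  · refine h₀.congr_deriv ?_
    simp [derivatives]
  · refine ((h₀.const_mul (-6)).add h₁).congr_deriv ?_
    simp only [derivatives]
    push_cast
    ring
  · refine (((h₀.const_mul 36).sub (h₁.const_mul 11)).add h₂).congr_deriv ?_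
    simp only [derivatives]
    push_cast
    ring
  · refine ((((h₀.const_mul (-216)).add (h₁.const_mul 91)).sub
      (h₂.const_mul 15)).add h₃).congr_deriv ?_
    simp only [derivatives]
    push_cast
    ring

theorem contDiff (he : IsFactorChain e) (hcont : Continuous (e 4)) : ContDiff ℝ 4 (e 0) := by
  have hcont_top : Continuous (derivatives e 4) := by
    have h₀ := he.continuous (j := 0) (by norm_num)
    have h₁ := he.continuous (j := 1) (by norm_num)
    have h₂ := he.continuous (j := 2) (by norm_num)
    have h₃ := he.continuous (j := 3) (by norm_num)
    unfold derivatives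
    fun_prop
  exact contDiff_of_hasDerivAt (f := derivatives e) (n := 4)
    (fun j hj => he.hasDerivAt_derivatives hj) hcont_top

theorem iteratedDeriv_combination (he : IsFactorChain e) (s : ℝ) :
    iteratedDeriv 4 (e 0) s + 18 * iteratedDeriv 3 (e 0) s + 119 * iteratedDeriv 2 (e 0) s
      + 342 * deriv (e 0) s + 360 * e 0 s = e 4 s := by
  have horder {k : ℕ} (hk : k ≤ 4) : iteratedDeriv k (e 0) s = derivatives e k s :=
    congrFun (iteratedDeriv_eq_of_hasDerivAt (f := derivatives e)
      (fun j hj => he.hasDerivAt_derivatives hj) hk) s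
  rw [← iteratedDeriv_one, horder (by norm_num), horder (by norm_num), horder (by norm_num),
    horder (by norm_num)]
  simp only [derivatives]
  ring

theorem antiperiodicExtension {T : ℝ} (hT : 0 < T) (he : IsFactorChain e)
    (hflip : ∀ j ≤ 4, e j T = -e j 0) :
    IsFactorChain fun j => antiperiodicExtension T (e j) := fun j hj s => by
  refine (hasDerivAt_antiperiodicExtension hT (he j hj) (hflip j hj.le) ?_ s).congr_deriv ?_
  · rw [hflip j hj.le, hflip (j + 1) hj]
    ring
  · simp only [_root_.antiperiodicExtension]
    ring

end IsFactorChain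

section LogarithmicVariable

/-- The factor chain obtained from successive derivatives `U 0, U 1, …` by the substitution
`t = (exp s - 1) / L`: the weight `exp (-6 * s)` on `U 0` implements `F(y) = y ^ 6 φ(log y)`, with
`y = 1 + L * t`. -/
noncomputable def logJet (L c : ℝ) (U : ℕ → ℝ → ℝ) (j : ℕ) (s : ℝ) : ℝ :=
  Real.exp ((j - 6) * s) * (c / L ^ j * U j ((Real.exp s - 1) / L))

variable {U : ℕ → ℝ → ℝ}

lemma hasDerivAt_logJet (L c : ℝ) {j : ℕ} (hU : ∀ t, HasDerivAt (U j) (U (j + 1) t) t) (s : ℝ) :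
    HasDerivAt (logJet L c U j) ((j - 6 : ℝ) * logJet L c U j s + logJet L c U (j + 1) s) s := by
  have hsubst : HasDerivAt (fun s => (Real.exp s - 1) / L) (Real.exp s / L) s :=
    ((Real.hasDerivAt_exp s).sub_const 1).div_const L
  have hcomp := ((hU ((Real.exp s - 1) / L)).comp s hsubst).const_mul (c / L ^ j)
  have hweight := ((hasDerivAt_id' s).const_mul (j - 6 : ℝ)).exp
  have hexp : Real.exp (((j + 1 : ℕ) - 6) * s) = Real.exp ((j - 6) * s) * Real.exp s := by
    rw [← Real.exp_add]
    push_cast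
    ring_nf
  refine (hweight.mul hcomp).congr_deriv ?_
  simp only [logJet, hexp, Function.comp_apply, pow_succ]
  ring

lemma logJet_log {q : ℝ} (hq : 1 < q) (c : ℝ) {j : ℕ} (hj : j ≤ 6)
    (hU : U j 1 = -q ^ (6 - j) * U j 0) :
    logJet (q - 1) c U j (Real.log q) = -logJet (q - 1) c U j 0 := by
  have hq₀ : 0 < q := by linarith
  have hweight : Real.exp ((j - 6) * Real.log q) = (q ^ (6 - j))⁻¹ := by
    rw [← Real.exp_log hq₀, ← Real.exp_nat_mul, ← Real.exp_neg, Real.log_exp, Nat.cast_sub hj]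
    push_cast
    ring_nf
  simp only [logJet, hweight, Real.exp_log hq₀, div_self (sub_pos.2 hq).ne', hU, mul_zero,
    Real.exp_zero, sub_self, zero_div]
  field_simp

end LogarithmicVariable

/-- A factor chain on `[0, T]` whose values flip sign from `0` to `T` and whose first entry solves
the equation there without vanishing identically: half a period of an oscillation. -/
structure IsOscillatoryArc (T : ℝ) (e : ℕ → ℝ → ℝ) : Prop where
  isFactorChain : IsFactorChain e
  flip : ∀ j < 4, e j T = -e j 0
  eq_neg_signedCbrt : ∀ s ∈ Icc 0 T, e 4 s = -signedCbrt (e 0 s)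
  exists_ne_zero : ∃ s ∈ Icc 0 T, e 0 s ≠ 0

lemma IsOscillatoryArc.flip_le_four {T : ℝ} {e : ℕ → ℝ → ℝ} (h : IsOscillatoryArc T e)
    (hT : 0 ≤ T) {j : ℕ} (hj : j ≤ 4) : e j T = -e j 0 := by
  rcases hj.lt_or_eq with hj | rfl
  · exact h.flip j hj
  · rw [h.eq_neg_signedCbrt T ⟨hT, le_rfl⟩, h.eq_neg_signedCbrt 0 ⟨le_rfl, hT⟩,
      h.flip 0 (by norm_num), signedCbrt_odd]

lemma logVariable_mem_Icc {q s : ℝ} (hq : 1 < q) (hs : s ∈ Icc 0 (Real.log q)) :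
    (Real.exp s - 1) / (q - 1) ∈ Icc (0 : ℝ) 1 := by
  have hone_le : 1 ≤ Real.exp s := Real.one_le_exp hs.1
  have hle : Real.exp s ≤ q := (Real.le_log_iff_exp_le (by linarith)).1 hs.2
  exact ⟨div_nonneg (by linarith) (by linarith), (div_le_one (by linarith)).2 (by linarith)⟩

section OscillatoryArc

variable {q v : ℝ} {g : ℝ → ℝ}

lemma IsProfile.logJet_zero (hg : IsProfile q g) (hq : 1 < q) (v : ℝ) {s : ℝ}
    (hs : s ∈ Icc 0 (Real.log q)) :
    logJet (q - 1) (v ^ 3) (greenJet q g) 0 s =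
      (Real.exp (-2 * s) * (v * g ((Real.exp s - 1) / (q - 1)))) ^ 3 := by
  have ht := logVariable_mem_Icc hq hs
  have hexp : Real.exp (((0 : ℕ) - 6) * s) = Real.exp (-2 * s) ^ 3 := by
    rw [← Real.exp_nat_mul]
    push_cast
    ring_nf
  rw [logJet, greenJet_zero_eq_integral hg.continuous ht, ← hg.pow_three_eq _ ht, hexp]
  ring

lemma logJet_greenJet_four (hq : 1 < q) (hv : v ^ 2 * greenDet q = (q - 1) ^ 4) (s : ℝ) :
    logJet (q - 1) (v ^ 3) (greenJet q g) 4 s =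
      -(Real.exp (-2 * s) * (v * g ((Real.exp s - 1) / (q - 1)))) := by
  have hscale : v ^ 3 / (q - 1) ^ 4 * greenDet q = v := by
    rw [div_mul_eq_mul_div, div_eq_iff (pow_pos (sub_pos.2 hq) 4).ne']
    linear_combination v * hv
  have hexp : ((4 : ℕ) - 6 : ℝ) = -2 := by norm_num
  simp only [logJet, greenJet, hexp]
  linear_combination -(Real.exp (-2 * s) * g ((Real.exp s - 1) / (q - 1))) * hscale

theorem IsProfile.isOscillatoryArc (hg : IsProfile q g) (hq : 1 < q)
    (hshoot : ∫ s in (0 : ℝ)..1, shootingWeight q s * g s = 0) (hv₀ : v ≠ 0)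
    (hv : v ^ 2 * greenDet q = (q - 1) ^ 4) :
    IsOscillatoryArc (Real.log q) (logJet (q - 1) (v ^ 3) (greenJet q g)) where
  isFactorChain _ hj := hasDerivAt_logJet _ _ (hasDerivAt_greenJet q hg.continuous hj)
  flip _ hj := logJet_log hq _ (by omega) (greenJet_at_one (by linarith) hg.continuous hshoot hj)
  eq_neg_signedCbrt s hs := by
    rw [hg.logJet_zero hq v hs, signedCbrt_pow_three, logJet_greenJet_four hq hv]
  exists_ne_zero := by
    have hmid : Real.log ((1 + q) / 2) ∈ Icc 0 (Real.log q) :=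
      ⟨Real.log_nonneg (by linarith), Real.log_le_log (by linarith) (by linarith)⟩
    have hhalf : (Real.exp (Real.log ((1 + q) / 2)) - 1) / (q - 1) = 1 / 2 := by
      rw [Real.exp_log (by linarith), div_eq_iff (by linarith)]
      ring
    refine ⟨_, hmid, ?_⟩
    rw [hg.logJet_zero hq v hmid, hhalf]
    have hpos := hg.pos (1 / 2) ⟨by norm_num, by norm_num⟩
    positivity

end OscillatoryArc

theorem exists_isOscillatoryArc : ∃ T > 0, ∃ e, IsOscillatoryArc T e := by
  obtain ⟨q, hq, hdet, g, hg, hshoot⟩ := exists_isProfile_integral_shootingWeight_mul_eq_zero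
  have hratio : 0 < (q - 1) ^ 4 / greenDet q := div_pos (pow_pos (sub_pos.2 hq) 4) hdet
  -- The amplitude `v` with `v ^ 2 * greenDet q = (q - 1) ^ 4` normalises the coefficient to `1`.
  have hv : √((q - 1) ^ 4 / greenDet q) ^ 2 * greenDet q = (q - 1) ^ 4 := by
    rw [Real.sq_sqrt hratio.le, div_mul_cancel₀ _ hdet.ne']
  exact ⟨Real.log q, Real.log_pos hq, _,
    hg.isOscillatoryArc hq hshoot (Real.sqrt_pos.2 hratio).ne' hv⟩

/-- existence of a nonconstant periodic C⁴ solution of the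
oscillatory-component equation
`φ⁗ + 18φ‴ + 119φ″ + 342φ′ + 360φ = −sign(φ)|φ|^{1/3}` governing compacton
profiles of the cubic fifth-order NDE near their interfaces. -/
theorem stmt19 :
    ∃ φ : ℝ → ℝ, ∃ T > (0:ℝ),
      ContDiff ℝ 4 φ ∧
      Function.Periodic φ T ∧
      (∃ s₁ s₂ : ℝ, φ s₁ ≠ φ s₂) ∧
      (∀ s : ℝ,
        iteratedDeriv 4 φ s + 18 * iteratedDeriv 3 φ s + 119 * iteratedDeriv 2 φ s
            + 342 * deriv φ s + 360 * φ s =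
          -(Real.sign (φ s) * |φ s| ^ ((1:ℝ)/3))) := by
  obtain ⟨T, hT, e, he⟩ := exists_isOscillatoryArc
  set φ := antiperiodicExtension T (e 0)
  have hchain := he.isFactorChain.antiperiodicExtension hT fun j => he.flip_le_four hT.le
  have hequation (s : ℝ) : antiperiodicExtension T (e 4) s = -signedCbrt (φ s) :=
    antiperiodicExtension_comp (F := -signedCbrt) (fun x => congrArg _ (signedCbrt_odd x)) hT
      he.eq_neg_signedCbrt s
  have hantiperiodic : Function.Antiperiodic φ T :=
    antiperiodic_antiperiodicExtension hT.ne' (e 0)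
  obtain ⟨s, hs, hne⟩ := he.exists_ne_zero
  have hφs : φ s ≠ 0 :=
    (antiperiodicExtension_of_mem_Icc hT (he.flip 0 (by norm_num)) hs).trans_ne hne
  refine ⟨φ, 2 * T, by positivity, hchain.contDiff ?_, hantiperiodic.periodic_two_mul,
    ⟨s + T, s, ?_⟩, fun s => (hchain.iteratedDeriv_combination s).trans (hequation s)⟩
  · have hφ : Continuous φ := hchain.continuous (j := 0) (by norm_num)
    exact (funext hequation) ▸ (continuous_signedCbrt.comp hφ).neg
  · rw [hantiperiodic s]
    exact neg_ne_self.2 hφs
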